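/- The Fock representation of the infinite Heisenberg algebra on Λ is irreducible: if W ⊆ Λ is a ℚ-linear subspace that is stable under multiplication by p_k for every k ≥ 1 and stable under the partial derivative ∂/∂p_k for every k ≥ 1, then W = {0} or W = Λ. -/

import Mathlib

open MvPolynomial Finset

noncomputable section

/-- The ring `Λ = ℚ[p₁, p₂, …]` of symmetric functions, as a polynomial ring in the
power sums `p_r`, `r ≥ 1`. -/
abbrev Λ : Type := MvPolynomial {r : ℕ // 1 ≤ r} ℚ

/-- The power sum `p_m` for `m ≥ 1` (and junk value `0` otherwise). -/
def Xp (m : ℕ) : Λ :=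
  if h : 1 ≤ m then MvPolynomial.X (⟨m, h⟩ : {r : ℕ // 1 ≤ r}) else 0

/-- The formal partial derivative `∂/∂p_m` for `m ≥ 1` (and junk value `0` otherwise). -/
def Dp (m : ℕ) : Λ →ₗ[ℚ] Λ :=
  if h : 1 ≤ m then (MvPolynomial.pderiv (⟨m, h⟩ : {r : ℕ // 1 ≤ r})).toLinearMap else 0

/-- The composite `∂/∂p_{v 0} ∘ ⋯ ∘ ∂/∂p_{v (k-1)}`. -/
def iterD {k : ℕ} (v : Fin k → ℕ) : Λ →ₗ[ℚ] Λ :=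
  (List.ofFn fun i => Dp (v i)).foldr (· ∘ₗ ·) LinearMap.id

/-!
A nonzero polynomial of least total degree in `W` is killed by every partial derivative, as these
lower the degree; in characteristic zero it is therefore a nonzero constant. Hence `1 ∈ W`, and
multiplication by the variables produces everything else from `1`.
-/

section GeneralVariables

variable {σ R : Type*} [CommSemiring R]

theorem add_single_mem_support_of_mem_support_pderiv {i : σ} {f : MvPolynomial σ R} {m : σ →₀ ℕ}
    (hm : m ∈ (pderiv i f).support) : m + Finsupp.single i 1 ∈ f.support := by
  rw [mem_support_iff, coeff_pderiv] at hm
  exact mem_support_iff.mpr (left_ne_zero_of_mul hm)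

theorem totalDegree_pderiv_lt {i : σ} {f : MvPolynomial σ R} (hf : pderiv i f ≠ 0) :
    (pderiv i f).totalDegree < f.totalDegree := by
  obtain ⟨m, hm, hdeg⟩ := exists_mem_eq_sup _ (support_nonempty.mpr hf) Finsupp.degree
  calc (pderiv i f).totalDegree = m.degree := hdeg
    _ < (m + Finsupp.single i 1).degree := by simp
    _ ≤ f.totalDegree := le_totalDegree (add_single_mem_support_of_mem_support_pderiv hm)

theorem eq_C_of_forall_pderiv_eq_zero [IsAddTorsionFree R] {f : MvPolynomial σ R}
    (hf : ∀ i, pderiv i f = 0) : f = C (coeff 0 f) := by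
  classical
  ext m
  rw [coeff_C]
  split_ifs with hm
  · rw [hm]
  obtain ⟨i, hi⟩ : ∃ i, m i ≠ 0 := Finsupp.ne_iff.mp (Ne.symm hm)
  obtain ⟨n, rfl⟩ : ∃ n, m = n + Finsupp.single i 1 :=
    ⟨_, (Finsupp.sub_add_single_one_cancel hi).symm⟩
  have hcoeff : (n i + 1) • coeff (n + Finsupp.single i 1) f = 0 := by
    simpa [hf i, mul_comm] using (coeff_pderiv (i := i) f n).symm
  exact (nsmul_eq_zero_iff_right (Nat.succ_ne_zero _)).mp hcoeff

theorem exists_C_mem_of_forall_pderiv_mem [IsAddTorsionFree R]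
    {W : Submodule R (MvPolynomial σ R)} (hW : W ≠ ⊥) (hder : ∀ i, ∀ f ∈ W, pderiv i f ∈ W) :
    ∃ c : R, c ≠ 0 ∧ C c ∈ W := by
  obtain ⟨f, ⟨hfW, hf0⟩, hmin⟩ :=
    exists_minimalFor_of_wellFoundedLT (fun f ↦ f ∈ W ∧ f ≠ 0) totalDegree (W.ne_bot_iff.mp hW)
  have hconst : f = C (coeff 0 f) := by
    refine eq_C_of_forall_pderiv_eq_zero fun i ↦ ?_
    by_contra hi
    have hlt := totalDegree_pderiv_lt hi
    exact hlt.not_ge (hmin ⟨hder i f hfW, hi⟩ hlt.le)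
  refine ⟨coeff 0 f, fun h0 ↦ hf0 ?_, hconst ▸ hfW⟩
  rw [hconst, h0, C_0]

theorem eq_top_of_one_mem_of_forall_X_mul_mem {W : Submodule R (MvPolynomial σ R)}
    (hone : 1 ∈ W) (hmul : ∀ i, ∀ f ∈ W, X i * f ∈ W) : W = ⊤ := by
  refine Submodule.eq_top_iff'.mpr fun f ↦ ?_
  induction f using MvPolynomial.induction_on with
  | C a => simpa [smul_eq_C_mul] using W.smul_mem a hone
  | add p q hp hq => exact W.add_mem hp hq
  | mul_X p i hp => exact mul_comm (X i) p ▸ hmul i p hp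

end GeneralVariables

theorem fock_irreducible_general {σ K : Type*} [Semifield K] [IsAddTorsionFree K]
    (W : Submodule K (MvPolynomial σ K)) (hmul : ∀ i, ∀ f ∈ W, X i * f ∈ W)
    (hder : ∀ i, ∀ f ∈ W, pderiv i f ∈ W) : W = ⊥ ∨ W = ⊤ := by
  refine or_iff_not_imp_left.mpr fun hW ↦ ?_
  obtain ⟨c, hc, hcW⟩ := exists_C_mem_of_forall_pderiv_mem hW hder
  have hone : (1 : MvPolynomial σ K) ∈ W := by
    simpa [smul_eq_C_mul, ← C_mul, hc] using W.smul_mem c⁻¹ hcW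
  exact eq_top_of_one_mem_of_forall_X_mul_mem hone hmul

theorem Xp_coe (i : {r : ℕ // 1 ≤ r}) : Xp i = X i :=
  dif_pos i.2

theorem Dp_coe_apply (i : {r : ℕ // 1 ≤ r}) (f : Λ) : Dp i f = pderiv i f := by
  simp [Dp, i.2]

/-- The Fock representation of the infinite Heisenberg algebra on `Λ` is irreducible:
a subspace stable under multiplication by every `p_k` and under every `∂/∂p_k` is `{0}`
or all of `Λ`. -/
theorem fock_irreducible (W : Submodule ℚ Λ)
    (hmul : ∀ k : ℕ, 1 ≤ k → ∀ f ∈ W, Xp k * f ∈ W)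
    (hder : ∀ k : ℕ, 1 ≤ k → ∀ f ∈ W, Dp k f ∈ W) :
    W = ⊥ ∨ W = ⊤ :=
  fock_irreducible_general W (fun i f hf ↦ Xp_coe i ▸ hmul i i.2 f hf)
    fun i f hf ↦ Dp_coe_apply i f ▸ hder i i.2 f hf
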